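/- There exist a constant R > 0 and a nonempty open interval I containing 0 such that for all a₃ ∈ ℝ ∖ {0} and a₄ ∈ ℝ there exists a function y(x), defined for all x with |a₄³ x| < R³ a₃⁴, such that { (x, y) ∈ ℝ² : |a₄³x| < R³a₃⁴, a₄ y ∈ a₃ I, and −x + a₃y³ + a₄y⁴ = 0 } = { (x, y(x)) : |a₄³x| < R³a₃⁴ }. Furthermore, y(x) is an analytic function of x^{1/3} (i.e., y(x) = Y(x^{1/3}) for a real-analytic Y), and it satisfies | y(x) − a₃^{−1/3}x^{1/3} + (1/3)a₃^{−5/3}a₄ x^{2/3} − (1/3)a₃^{−3}a₄² x | ≤ C |a₃|^{−13/3} |a₄|³ |x|^{4/3} for all |a₄³x| < R³a₃⁴, where the constant C is independent of a₃ and a₄. -/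

import Mathlib

open Real Set

noncomputable section

/-- The real cube root. -/
def cbrt (s : ℝ) : ℝ := Real.sign s * |s| ^ ((1 : ℝ) / 3)

/-!
Write `b = a₃^{1/3}`, `s = x^{1/3}`, `t = a₄ s / b⁴` and substitute `y = s / (b w)`. The equation
`a₃ y³ + a₄ y⁴ = x` becomes `w⁴ - w = t`, which involves no parameters other than `t`, and
`a₄ y / a₃ = w³ - 1`. Since `w ↦ w⁴ - w` is increasing with nonvanishing derivative for
`w³ > 1/4`, it has an analytic inverse near `w = 1`, and expanding `1 / w` in powers of `t` is a
polynomial identity in `w`. Nothing is ever divided by `a₄`, so `a₄ = 0` is not a special case.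
-/

lemma pow_three_cbrt (x : ℝ) : cbrt x ^ 3 = x := by
  have h : (|x| ^ ((1 : ℝ) / 3)) ^ 3 = |x| := by
    rw [← Real.rpow_mul_natCast (abs_nonneg x)]
    norm_num
  rw [cbrt, mul_pow, h]
  rcases lt_trichotomy x 0 with hx | rfl | hx
  · rw [Real.sign_of_neg hx, abs_of_neg hx]
    ring
  · simp
  · rw [Real.sign_of_pos hx, abs_of_pos hx]
    ring

lemma cbrt_pow_three (s : ℝ) : cbrt (s ^ 3) = s :=
  (show Odd 3 by decide).pow_injective (pow_three_cbrt _)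

lemma abs_pow_three_rpow_div_three (s : ℝ) (k : ℤ) : |s ^ 3| ^ ((k : ℝ) / 3) = |s| ^ k := by
  rw [abs_pow, ← Real.rpow_natCast_mul (abs_nonneg s), Nat.cast_ofNat,
    mul_div_cancel₀ _ three_ne_zero, Real.rpow_intCast]

lemma analyticOnNhd_image_of_leftInvOn {𝕜 : Type*} [NontriviallyNormedField 𝕜] [CompleteSpace 𝕜]
    [CharZero 𝕜] {f g : 𝕜 → 𝕜} {U : Set 𝕜} (hU : IsOpen U) (hf : AnalyticOnNhd 𝕜 f U)
    (hf' : ∀ w ∈ U, deriv f w ≠ 0) (hgf : LeftInvOn g f U) : AnalyticOnNhd 𝕜 g (f '' U) := by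
  rintro _ ⟨w, hw, rfl⟩
  rw [← analyticAt_comp_iff_of_deriv_ne_zero (hf w hw) (hf' w hw)]
  exact analyticAt_id.congr
    (Filter.eventually_of_mem (hU.mem_nhds hw) fun _ hz => (hgf hz).symm)

lemma deriv_pow_four_sub_self (w : ℝ) : deriv (fun w : ℝ => w ^ 4 - w) w = 4 * w ^ 3 - 1 := by
  simp

lemma deriv_pow_four_sub_self_pos {c w : ℝ} (hc : 1 ≤ 4 * c ^ 3) (hw : c < w) :
    0 < deriv (fun w : ℝ => w ^ 4 - w) w := by
  have : c ^ 3 < w ^ 3 := (show Odd 3 by decide).pow_lt_pow.mpr hw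
  rw [deriv_pow_four_sub_self]
  linarith

lemma strictMonoOn_pow_four_sub_self {c : ℝ} (hc : 1 ≤ 4 * c ^ 3) :
    StrictMonoOn (fun w : ℝ => w ^ 4 - w) (Ici c) := by
  refine strictMonoOn_of_deriv_pos (convex_Ici c) (by fun_prop) fun w hw => ?_
  rw [interior_Ici] at hw
  exact deriv_pow_four_sub_self_pos hc hw

/-- The solution `w` near `1` of `w ^ 4 - w = t`, as a function of `t`. It is meaningful for
`|t| < 1 / 3`; the interval is chosen with `4 * (2 / 3) ^ 3 > 1`, which ensures uniqueness. -/
def quarticBranch : ℝ → ℝ :=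
  Function.invFunOn (fun w : ℝ => w ^ 4 - w) (Ioo (2 / 3) 2)

lemma leftInvOn_quarticBranch :
    LeftInvOn quarticBranch (fun w : ℝ => w ^ 4 - w) (Ioo (2 / 3) 2) :=
  ((strictMonoOn_pow_four_sub_self (by norm_num)).injOn.mono
    (Ioo_subset_Ioi_self.trans Ioi_subset_Ici_self)).leftInvOn_invFunOn

lemma mem_image_pow_four_sub_self {t : ℝ} (ht : |t| < 1 / 3) :
    t ∈ (fun w : ℝ => w ^ 4 - w) '' Ioo (2 / 3) 2 := by
  obtain ⟨ht₁, ht₂⟩ := abs_lt.mp ht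
  refine intermediate_value_Ioo (by norm_num) (by fun_prop) ⟨?_, ?_⟩ <;> norm_num <;> linarith

lemma quarticBranch_mem {t : ℝ} (ht : |t| < 1 / 3) : quarticBranch t ∈ Ioo (2 / 3) 2 :=
  Function.invFunOn_mem (mem_image_pow_four_sub_self ht)

lemma quarticBranch_ne_zero {t : ℝ} (ht : |t| < 1 / 3) : quarticBranch t ≠ 0 := by
  linarith [(quarticBranch_mem ht).1]

lemma quarticBranch_pow_four_sub_self {t : ℝ} (ht : |t| < 1 / 3) :
    quarticBranch t ^ 4 - quarticBranch t = t :=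
  Function.invFunOn_eq (mem_image_pow_four_sub_self ht)

lemma analyticAt_quarticBranch {t : ℝ} (ht : |t| < 1 / 3) : AnalyticAt ℝ quarticBranch t :=
  analyticOnNhd_image_of_leftInvOn isOpen_Ioo (fun _ _ => by fun_prop)
    (fun _ hw => (deriv_pow_four_sub_self_pos (by norm_num) hw.1).ne')
    leftInvOn_quarticBranch t (mem_image_pow_four_sub_self ht)

lemma abs_inv_sub_le_of_pow_four_sub_self {w t : ℝ} (hw : 0 < w) (hwt : w ^ 4 - w = t) :
    |w⁻¹ - (1 - t / 3 + t ^ 2 / 3)| ≤ w⁻¹ ^ 4 * |t| ^ 3 := by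
  -- Truncating at order two leaves an error divisible by `(1 - w) ^ 3`, with cofactor `w⁻¹ * Q`;
  -- it is comparable to `t ^ 3` because `t = (w - 1) * (w * (w ^ 2 + w + 1))`.
  set Q := ((w ^ 2 + w + 1) ^ 3 + w ^ 3 + 2 * w ^ 2 + 3 * w + 2) / 3 with hQ
  have hQ_nonneg : 0 ≤ Q := by positivity
  have hQ_le : Q ≤ (w ^ 2 + w + 1) ^ 3 := by
    have : 0 ≤ 2 * w ^ 6 + 6 * w ^ 5 + 12 * w ^ 4 + 13 * w ^ 3 + 10 * w ^ 2 + 3 * w := by positivity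
    linarith
  have hfactor : w⁻¹ - (1 - t / 3 + t ^ 2 / 3) = w⁻¹ * (1 - w) ^ 3 * Q := by
    rw [← hwt, hQ]
    field_simp
    ring
  have ht : |t| = |1 - w| * (w * (w ^ 2 + w + 1)) := by
    rw [← abs_of_pos (show 0 < w * (w ^ 2 + w + 1) by positivity), ← abs_mul, ← abs_neg t, ← hwt]
    ring_nf
  calc |w⁻¹ - (1 - t / 3 + t ^ 2 / 3)|
      = w⁻¹ * |1 - w| ^ 3 * Q := by
        rw [hfactor, abs_mul, abs_mul, abs_pow, abs_of_pos (inv_pos.mpr hw),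
          abs_of_nonneg hQ_nonneg]
    _ ≤ w⁻¹ * |1 - w| ^ 3 * (w ^ 2 + w + 1) ^ 3 := by gcongr
    _ = w⁻¹ ^ 4 * |t| ^ 3 := by
        rw [ht]
        field_simp

/-- The solution `y` near `0` of `b ^ 3 * y ^ 3 + a * y ^ 4 = s ^ 3`, as a function of `s`; the
parameters are `b = a₃^{1/3}` and `a = a₄`. -/
def quarticRoot (b a s : ℝ) : ℝ :=
  s / (b * quarticBranch (a * s / b ^ 4))

lemma abs_mul_div_pow_four_lt_iff {a b s R : ℝ} (hb : b ≠ 0) :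
    |a * s / b ^ 4| < R ↔ |a ^ 3 * s ^ 3| < R ^ 3 * (b ^ 3) ^ 4 := by
  have hb₁₂ : 0 < (b ^ 3) ^ 4 := by positivity
  rw [← (show Odd 3 by decide).pow_lt_pow, ← abs_pow, div_pow, mul_pow,
    pow_right_comm b 4 3, abs_div, abs_of_pos hb₁₂, div_lt_iff₀ hb₁₂]

section QuarticRoot

variable {a b s : ℝ}

lemma mul_quarticRoot (hb : b ≠ 0) (ht : |a * s / b ^ 4| < 1 / 3) :
    a * quarticRoot b a s = b ^ 3 * (quarticBranch (a * s / b ^ 4) ^ 3 - 1) := by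
  have hw := quarticBranch_pow_four_sub_self ht
  have hw₀ := quarticBranch_ne_zero ht
  rw [quarticRoot]
  generalize quarticBranch (a * s / b ^ 4) = w at hw hw₀
  rw [eq_div_iff (by positivity)] at hw
  field_simp
  linear_combination -hw

lemma quarticRoot_spec (hb : b ≠ 0) (ht : |a * s / b ^ 4| < 1 / 3) :
    b ^ 3 * quarticRoot b a s ^ 3 + a * quarticRoot b a s ^ 4 = s ^ 3 := by
  have hs : b * quarticBranch (a * s / b ^ 4) * quarticRoot b a s = s :=
    mul_div_cancel₀ s (mul_ne_zero hb (quarticBranch_ne_zero ht))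
  nth_rw 3 [← hs]
  linear_combination quarticRoot b a s ^ 3 * mul_quarticRoot hb ht

lemma mul_quarticRoot_mem (hb : b ≠ 0) (ht : |a * s / b ^ 4| < 1 / 3) :
    a * quarticRoot b a s ∈ (fun r => b ^ 3 * r) '' Ioo ((2 / 3) ^ 3 - 1) (2 ^ 3 - 1) := by
  obtain ⟨hw₁, hw₂⟩ := quarticBranch_mem ht
  refine ⟨_, ⟨?_, ?_⟩, (mul_quarticRoot hb ht).symm⟩ <;> gcongr

lemma eq_quarticRoot {y r : ℝ} (hb : b ≠ 0) (hr : r ∈ Ioo ((2 / 3 : ℝ) ^ 3 - 1) (2 ^ 3 - 1))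
    (hy : a * y = b ^ 3 * r) (hroot : b ^ 3 * y ^ 3 + a * y ^ 4 = s ^ 3) :
    y = quarticRoot b a s := by
  obtain ⟨w, hwr⟩ : ∃ w : ℝ, w ^ 3 = 1 + r := ⟨_, pow_three_cbrt _⟩
  have odd_three : Odd 3 := by decide
  have hw : w ∈ Ioo (2 / 3) 2 :=
    ⟨odd_three.pow_lt_pow.mp (by linarith [hr.1]),
      odd_three.pow_lt_pow.mp (by linarith [hr.2])⟩
  have hs : b * y * w = s := odd_three.pow_injective (by
    dsimp only
    linear_combination b ^ 3 * y ^ 3 * hwr - y ^ 3 * hy + hroot)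
  have ht : a * s / b ^ 4 = w ^ 4 - w := by
    rw [div_eq_iff (by positivity)]
    linear_combination b * w * hy - a * hs - b ^ 4 * w * hwr
  have hw₀ : w ≠ 0 := by linarith [hw.1]
  rw [quarticRoot, ht, leftInvOn_quarticBranch hw, ← hs]
  field_simp

lemma analyticAt_quarticRoot (hb : b ≠ 0) (ht : |a * s / b ^ 4| < 1 / 3) :
    AnalyticAt ℝ (quarticRoot b a) s := by
  have hbranch : AnalyticAt ℝ (fun s => quarticBranch (a * s / b ^ 4)) s :=
    AnalyticAt.fun_comp (analyticAt_quarticBranch ht)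
      ((analyticAt_const.mul analyticAt_id).div analyticAt_const (by positivity))
  exact analyticAt_id.div (analyticAt_const.mul hbranch)
    (mul_ne_zero hb (quarticBranch_ne_zero ht))

lemma abs_quarticRoot_sub_le (hb : b ≠ 0) (ht : |a * s / b ^ 4| < 1 / 3) :
    |quarticRoot b a s - b⁻¹ * s + 1 / 3 * b ^ (-5 : ℤ) * a * s ^ 2
        - 1 / 3 * (b ^ 3) ^ (-3 : ℤ) * a ^ 2 * s ^ 3|
      ≤ (3 / 2) ^ 4 * |b| ^ (-13 : ℤ) * |a| ^ 3 * |s| ^ 4 := by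
  set t := a * s / b ^ 4 with ht_def
  set w := quarticBranch t with hw_def
  have hw : 2 / 3 < w := (quarticBranch_mem ht).1
  have hw_inv : w⁻¹ ≤ 3 / 2 := by
    rw [← inv_div]
    gcongr
  calc |quarticRoot b a s - b⁻¹ * s + 1 / 3 * b ^ (-5 : ℤ) * a * s ^ 2
        - 1 / 3 * (b ^ 3) ^ (-3 : ℤ) * a ^ 2 * s ^ 3|
      = |s / b| * |w⁻¹ - (1 - t / 3 + t ^ 2 / 3)| := by
        rw [← abs_mul, quarticRoot, ← ht_def, ← hw_def, ht_def]
        congr 1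
        field_simp
        ring
    _ ≤ |s / b| * (w⁻¹ ^ 4 * |t| ^ 3) := by
        gcongr
        exact abs_inv_sub_le_of_pow_four_sub_self (by linarith) (quarticBranch_pow_four_sub_self ht)
    _ ≤ |s / b| * ((3 / 2) ^ 4 * |t| ^ 3) := by gcongr
    _ = (3 / 2) ^ 4 * |b| ^ (-13 : ℤ) * |a| ^ 3 * |s| ^ 4 := by
        rw [ht_def, abs_div, abs_div, abs_mul, abs_pow]
        have : |b| ≠ 0 := abs_ne_zero.mpr hb
        field_simp

end QuarticRoot

/-- **Quartic inversion.** There are `R > 0` and a nonempty open interval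
`I ∋ 0` such that for all `a₃ ≠ 0`, `a₄`, the equation `−x + a₃y³ + a₄y⁴ = 0` has, for
`|a₄³x| < R³a₃⁴` and `a₄y ∈ a₃I`, a unique solution branch `y(x)`, which is an analytic
function of `x^{1/3}` and admits the stated third-order cube-root expansion. -/
theorem quartic_inversion :
    ∃ R : ℝ, 0 < R ∧ ∃ lo hi : ℝ, lo < 0 ∧ 0 < hi ∧ ∃ C : ℝ,
      ∀ a₃ a₄ : ℝ, a₃ ≠ 0 →
        ∃ y : ℝ → ℝ,
          -- the solution set coincides with the graph of `y`
          ({p : ℝ × ℝ | |a₄ ^ 3 * p.1| < R ^ 3 * a₃ ^ 4 ∧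
              a₄ * p.2 ∈ (fun r => a₃ * r) '' Ioo lo hi ∧
              -p.1 + a₃ * p.2 ^ 3 + a₄ * p.2 ^ 4 = 0}
            = {p : ℝ × ℝ | |a₄ ^ 3 * p.1| < R ^ 3 * a₃ ^ 4 ∧ p.2 = y p.1}) ∧
          -- `y` is an analytic function of `x^{1/3}`
          (∃ Y : ℝ → ℝ,
            AnalyticOnNhd ℝ Y {s : ℝ | |a₄ ^ 3 * s ^ 3| < R ^ 3 * a₃ ^ 4} ∧
            ∀ x : ℝ, |a₄ ^ 3 * x| < R ^ 3 * a₃ ^ 4 → y x = Y (cbrt x)) ∧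
          -- the cube-root expansion, with constant independent of `a₃, a₄`
          ∀ x : ℝ, |a₄ ^ 3 * x| < R ^ 3 * a₃ ^ 4 →
            |y x - (cbrt a₃)⁻¹ * cbrt x
                + 1 / 3 * (cbrt a₃) ^ (-5 : ℤ) * a₄ * cbrt x ^ 2
                - 1 / 3 * a₃ ^ (-3 : ℤ) * a₄ ^ 2 * x|
              ≤ C * |a₃| ^ (-(13 : ℝ) / 3) * |a₄| ^ 3 * |x| ^ ((4 : ℝ) / 3) := by
  refine ⟨1 / 3, by norm_num, (2 / 3) ^ 3 - 1, 2 ^ 3 - 1, by norm_num, by norm_num, (3 / 2) ^ 4,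
    fun a₃ a₄ h₃ => ?_⟩
  obtain ⟨b, rfl⟩ : ∃ b, b ^ 3 = a₃ := ⟨_, pow_three_cbrt a₃⟩
  have hb : b ≠ 0 := ne_zero_pow three_ne_zero h₃
  have small {s : ℝ} (hs : |a₄ ^ 3 * s ^ 3| < (1 / 3) ^ 3 * (b ^ 3) ^ 4) :
      |a₄ * s / b ^ 4| < 1 / 3 :=
    (abs_mul_div_pow_four_lt_iff hb).mpr hs
  refine ⟨fun x => quarticRoot b a₄ (cbrt x), ?_,
    ⟨quarticRoot b a₄, fun s hs => analyticAt_quarticRoot hb (small hs), fun _ _ => rfl⟩,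
    fun x hx => ?_⟩
  · ext ⟨x, y⟩
    obtain ⟨s, rfl⟩ : ∃ s, s ^ 3 = x := ⟨_, pow_three_cbrt x⟩
    simp only [mem_ofPred_eq, cbrt_pow_three]
    refine and_congr_right fun hs => ⟨fun ⟨⟨r, hr, hry⟩, hroot⟩ => ?_, ?_⟩
    · exact eq_quarticRoot hb hr hry.symm (by linear_combination hroot)
    · rintro rfl
      exact ⟨mul_quarticRoot_mem hb (small hs), by linarith [quarticRoot_spec hb (small hs)]⟩
  · obtain ⟨s, rfl⟩ : ∃ s, s ^ 3 = x := ⟨_, pow_three_cbrt x⟩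
    have h₁₃ : |b ^ 3| ^ (-(13 : ℝ) / 3) = |b| ^ (-13 : ℤ) := by
      simpa using abs_pow_three_rpow_div_three b (-13)
    have h₄ : |s ^ 3| ^ ((4 : ℝ) / 3) = |s| ^ 4 := by
      simpa using abs_pow_three_rpow_div_three s 4
    simp only [h₁₃, h₄, cbrt_pow_three]
    exact abs_quarticRoot_sub_le hb (small hx)
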